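/- Let G be a connected simple graph with vertex set {0,...,n} and m edges, and let iota be an m-by-g integer matrix (g = m - n) whose columns form a Z-basis of the lattice of integral flows Flow(G). Then the abelian group Z^g / im(iota^T iota) has order equal to the number of spanning trees of G. -/

import Mathlib

/-!
The quotient has order `det (ιᵀ ι)`, which Cauchy–Binet writes as the sum of the squares of the
maximal minors of `ι`. Fix such a minor, and let `T` be the set of edges whose rows are left out.
If `T` is connected, the fundamental cycles of the edges outside `T` are integral flows, and
expanding them in the given basis inverts the minor over `ℤ`, so its square is `1`. If `T` is
disconnected, the coboundary of the indicator function of a component of `T` vanishes on `T` and is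
orthogonal to all flows, so it is a nonzero linear relation between the rows of the minor. By
Euler's formula the flow lattice has rank `m - n`, so a connected `T` is a spanning tree.
-/

open Matrix

theorem finrank_range_add_finrank_ker_of_isDomain {R M N : Type*} [CommRing R] [IsDomain R]
    [AddCommGroup M] [Module R M] [Module.Finite R M] [AddCommGroup N] [Module R N]
    (f : M →ₗ[R] N) :
    Module.finrank R (LinearMap.range f) + Module.finrank R (LinearMap.ker f) =
      Module.finrank R M := by
  rw [← f.quotKerEquivRange.finrank_eq, Submodule.finrank_quotient_add_finrank]

theorem natCard_quotient_range_eq_natAbs_det {M : Type*} [AddCommGroup M] [Module.Free ℤ M]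
    [Module.Finite ℤ M] (f : M →ₗ[ℤ] M) :
    Nat.card (M ⧸ LinearMap.range f) = (LinearMap.det f).natAbs := by
  by_cases hf : Function.Injective f
  · exact (Submodule.natAbs_det_equiv _ (LinearEquiv.ofInjective f hf)).symm
  · have hdet : LinearMap.det f = 0 := by
      rwa [LinearMap.det_eq_zero_iff_ker_ne_bot, ne_eq, LinearMap.ker_eq_bot]
    have hinf : Infinite (M ⧸ LinearMap.range f) := by
      rw [← not_finite_iff_infinite, Submodule.finiteQuotient_iff]
      intro hrank
      have hker : Module.finrank ℤ (LinearMap.ker f) = 0 := by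
        have := finrank_range_add_finrank_ker_of_isDomain f
        omega
      exact hf (LinearMap.ker_eq_bot.1 (Submodule.finrank_eq_zero.1 hker))
    rw [hdet, Int.natAbs_zero, Nat.card_eq_zero_of_infinite]

section Subsets
variable {ι E : Type*}

theorem range_coe_comp_equiv {S : Finset E} (e : ι ≃ S) :
    (Set.range fun i => (e i : E)) = S :=
  (e.surjective.range_comp Subtype.val).trans Subtype.range_coe

variable [Fintype ι]

theorem exists_perm_comp_eq_of_injective
    (e : ∀ S : Set.powersetCard E (Fintype.card ι), ι ≃ (S : Finset E)) {f : ι → E}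
    (hf : Function.Injective f) :
    ∃ (S : Set.powersetCard E (Fintype.card ι)) (σ : Equiv.Perm ι), ∀ i, (e S (σ i) : E) = f i := by
  let S : Set.powersetCard E (Fintype.card ι) :=
    Set.powersetCard.ofCard (s := Finset.univ.map ⟨f, hf⟩) (by simp)
  have hS (i : ι) : f i ∈ (S : Finset E) := by simp [S]
  have hσ : Function.Injective fun i => (e S).symm ⟨f i, hS i⟩ := fun i j hij => by
    simpa [hf.eq_iff] using hij
  exact ⟨S, .ofBijective _ (Finite.injective_iff_bijective.1 hσ), fun i => by simp⟩

theorem injective_sigma_comp (e : ∀ S : Set.powersetCard E (Fintype.card ι), ι ≃ (S : Finset E)) :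
    Function.Injective fun (p : Σ _ : Set.powersetCard E (Fintype.card ι), Equiv.Perm ι) (i : ι) =>
      (e p.1 (p.2 i) : E) := by
  rintro ⟨S, σ⟩ ⟨T, τ⟩ h
  obtain rfl : S = T := Subtype.ext <| Finset.coe_injective <| by
    rw [← range_coe_comp_equiv (σ.trans (e S)), ← range_coe_comp_equiv (τ.trans (e T))]
    exact congrArg Set.range h
  congr
  ext i
  exact (e S).injective (Subtype.ext (congrFun h i))

end Subsets

section CauchyBinet
variable {ι E R : Type*} [Fintype ι] [DecidableEq ι] [CommRing R]

theorem det_mul_det_eq_sum_perm (A B : Matrix ι ι R) :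
    A.det * B.det = ∑ σ : Equiv.Perm ι, (∏ i, A i (σ i)) * (B.submatrix σ id).det := by
  rw [← det_transpose A, det_apply', Finset.sum_mul]
  refine Finset.sum_congr rfl fun σ _ => ?_
  rw [det_permute]
  simp only [transpose_apply]
  ring

theorem det_submatrix_eq_zero_of_not_injective (B : Matrix E ι R) {f : ι → E}
    (hf : ¬ Function.Injective f) : (B.submatrix f id).det = 0 := by
  obtain ⟨i, j, hij, hne⟩ := Function.not_injective_iff.1 hf
  exact det_zero_of_row_eq hne (funext fun k => by simp only [submatrix_apply, hij])

variable [Fintype E]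

theorem det_mul_eq_sum_prod_mul_det_submatrix (A : Matrix ι E R) (B : Matrix E ι R) :
    (A * B).det = ∑ f : ι → E, (∏ i, A i (f i)) * (B.submatrix f id).det := by
  classical
  have hrows : A * B = fun i => ∑ k, A i k • B k := by
    ext i j
    simp [mul_apply]
  calc (A * B).det
      = detRowAlternating (fun i => ∑ k, A i k • B k) := by rw [hrows]; rfl
    _ = ∑ f : ι → E, detRowAlternating (fun i => A i (f i) • B (f i)) :=
        detRowAlternating.toMultilinearMap.map_sum _
    _ = ∑ f : ι → E, (∏ i, A i (f i)) * (B.submatrix f id).det :=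
        Finset.sum_congr rfl fun f _ => detRowAlternating.toMultilinearMap.map_smul_univ _ _

theorem cauchy_binet (A : Matrix ι E R) (B : Matrix E ι R)
    (e : ∀ S : Set.powersetCard E (Fintype.card ι), ι ≃ (S : Finset E)) :
    (A * B).det = ∑ S, (A.submatrix id fun i => (e S i : E)).det *
      (B.submatrix (fun i => (e S i : E)) id).det := by
  simp only [det_mul_det_eq_sum_perm]
  rw [det_mul_eq_sum_prod_mul_det_submatrix, ← Fintype.sum_sigma']
  symm
  refine Fintype.sum_of_injective _ (injective_sigma_comp e) _ _ (fun f hf => ?_) fun _ => rfl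
  rw [det_submatrix_eq_zero_of_not_injective, mul_zero]
  contrapose! hf
  obtain ⟨S, σ, hσ⟩ := exists_perm_comp_eq_of_injective e hf
  exact ⟨⟨S, σ⟩, funext hσ⟩

end CauchyBinet

/-- The graph on `V` that joins the endpoints `head k` and `tail k` of each edge `k ∈ T` of an
oriented multigraph. Being a simple graph it forgets loops and multiplicities, which do not affect
connectivity. -/
def edgeGraph {V E : Type*} (head tail : E → V) (T : Set E) : SimpleGraph V :=
  .fromEdgeSet ((fun k => s(head k, tail k)) '' T)

/-- The signed incidence matrix of an oriented multigraph, whose kernel is the module of flows with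
coefficients in `R`. The column of a loop is zero. -/
def boundaryMatrix {V E : Type*} (R : Type*) [DecidableEq V] [CommRing R] (head tail : E → V) :
    Matrix V E R :=
  of fun v k => (Pi.single (head k) 1 - Pi.single (tail k) 1 : V → R) v

/-- A set of edges of a multigraph forms a spanning tree. Acyclicity is expressed by the number of
edges, since `edgeGraph` does not see loops and parallel edges. -/
def IsSpanningTree {V E : Type*} [Fintype V] (head tail : E → V) (T : Finset E) : Prop :=
  (edgeGraph head tail T).Connected ∧ T.card + 1 = Fintype.card V

section EdgeGraph
variable {V E : Type*} {head tail : E → V}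

theorem reachable_head_tail {T : Set E} {k : E} (hk : k ∈ T) :
    (edgeGraph head tail T).Reachable (head k) (tail k) := by
  by_cases hne : head k = tail k
  · rw [hne]
  · exact SimpleGraph.Adj.reachable
      ((SimpleGraph.fromEdgeSet_adj _).2 ⟨Set.mem_image_of_mem _ hk, hne⟩)

theorem edgeSet_edgeGraph (hne : ∀ k, head k ≠ tail k) (T : Set E) :
    (edgeGraph head tail T).edgeSet = (fun k => s(head k, tail k)) '' T := by
  rw [edgeGraph, SimpleGraph.edgeSet_fromEdgeSet, sdiff_eq_left, Set.disjoint_left]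
  rintro _ ⟨k, -, rfl⟩ hdiag
  exact hne k (by simpa using hdiag)

theorem edgeGraph_univ_eq {G : SimpleGraph V} (hadj : ∀ k, G.Adj (head k) (tail k))
    (hsurj : ∀ e ∈ G.edgeSet, ∃ k, s(head k, tail k) = e) : edgeGraph head tail .univ = G := by
  rw [← SimpleGraph.edgeSet_inj, edgeSet_edgeGraph fun k => (hadj k).ne, Set.image_univ]
  exact Set.Subset.antisymm (Set.range_subset_iff.2 hadj) hsurj

theorem isTree_edgeGraph_iff [Fintype V] (hne : ∀ k, head k ≠ tail k)
    (hinj : Function.Injective fun k => s(head k, tail k)) (T : Finset E) :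
    (edgeGraph head tail T).IsTree ↔ IsSpanningTree head tail T := by
  rw [SimpleGraph.isTree_iff_connected_and_card, edgeSet_edgeGraph hne,
    Nat.card_image_of_injective hinj, Nat.card_eq_card_toFinset, Finset.toFinset_coe,
    Nat.card_eq_fintype_card, IsSpanningTree]

theorem natCard_powersetCard_compl_connected [Fintype V] [Fintype E] [DecidableEq E] {n : ℕ}
    (hn : n + Fintype.card V = Fintype.card E + 1) :
    Nat.card {S : Set.powersetCard E n //
        (edgeGraph head tail ((S : Finset E)ᶜ : Finset E)).Connected} =
      Nat.card {T : Finset E // IsSpanningTree head tail T} := by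
  refine Nat.card_congr <|
    (Equiv.subtypeSubtypeEquivSubtypeInter (fun S : Finset E => S.card = n)
      fun S => (edgeGraph head tail (Sᶜ : Finset E)).Connected).trans <|
    (compl_involutive.toPerm Compl.compl).subtypeEquiv fun S => ?_
  have := S.card_add_card_compl
  rw [IsSpanningTree, and_comm, Function.Involutive.coe_toPerm]
  exact and_congr_right fun _ => by omega

end EdgeGraph

section Boundary
variable {V E R : Type*} [DecidableEq V] [CommRing R] {head tail : E → V}

theorem boundaryMatrix_apply_of_ne {k : E} (hk : head k ≠ tail k) (v : V) :
    boundaryMatrix R head tail v k = if v = head k then 1 else if v = tail k then -1 else 0 := by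
  simp only [boundaryMatrix, of_apply, Pi.sub_apply, Pi.single_apply]
  split_ifs <;> simp_all

theorem vecMul_boundaryMatrix [Fintype V] (p : V → R) (k : E) :
    (p ᵥ* boundaryMatrix R head tail) k = p (head k) - p (tail k) := by
  simp [vecMul, boundaryMatrix, dotProduct, mul_sub, Pi.single_apply]

theorem eq_of_reachable_of_vecMul_boundaryMatrix_eq_zero [Fintype V] {T : Set E} {p : V → R}
    (hp : ∀ k ∈ T, (p ᵥ* boundaryMatrix R head tail) k = 0) {u v : V}
    (h : (edgeGraph head tail T).Reachable u v) : p u = p v := by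
  obtain ⟨w⟩ := h
  induction w with
  | nil => rfl
  | cons hadj _ ih =>
    obtain ⟨⟨k, hk, hends⟩, -⟩ := (SimpleGraph.fromEdgeSet_adj _).1 hadj
    have hpk : p (head k) = p (tail k) := sub_eq_zero.1 (vecMul_boundaryMatrix p k ▸ hp k hk)
    rcases Sym2.eq_iff.1 hends with ⟨hu, hv⟩ | ⟨hu, hv⟩ <;> rw [← ih, ← hu, ← hv, hpk]

theorem exists_cut_of_not_connected [Fintype V] [Nontrivial R] {T : Set E}
    (hG : (edgeGraph head tail .univ).Connected) (hT : ¬ (edgeGraph head tail T).Connected) :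
    ∃ p : V → R, p ᵥ* boundaryMatrix R head tail ≠ 0 ∧
      ∀ k ∈ T, (p ᵥ* boundaryMatrix R head tail) k = 0 := by
  classical
  obtain ⟨a, b, hab⟩ : ∃ a b, ¬ (edgeGraph head tail T).Reachable a b := by
    contrapose! hT
    exact (SimpleGraph.connected_iff _).2 ⟨hT, hG.nonempty⟩
  let p : V → R := fun v => if (edgeGraph head tail T).Reachable a v then 1 else 0
  refine ⟨p, fun hzero => ?_, fun k hk => ?_⟩
  · have hp : p a = p b := eq_of_reachable_of_vecMul_boundaryMatrix_eq_zero
      (fun k _ => congrFun hzero k) (hG.preconnected a b)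
    simp [p, hab] at hp
  · have hends : (edgeGraph head tail T).Reachable a (head k) ↔
        (edgeGraph head tail T).Reachable a (tail k) :=
      ⟨fun h => h.trans (reachable_head_tail hk), fun h => h.trans (reachable_head_tail hk).symm⟩
    simp only [vecMul_boundaryMatrix, p, hends, sub_self]

theorem boundaryMatrix_mulVec_single [Fintype E] [DecidableEq E] (k : E) :
    boundaryMatrix R head tail *ᵥ Pi.single k 1 =
      Pi.single (head k) 1 - Pi.single (tail k) 1 := by
  rw [mulVec_single_one]
  rfl

variable [Fintype E]

theorem exists_chain_of_reachable {T : Set E} {u v : V}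
    (h : (edgeGraph head tail T).Reachable u v) :
    ∃ x : E → R, (∀ k ∉ T, x k = 0) ∧
      boundaryMatrix R head tail *ᵥ x = Pi.single u 1 - Pi.single v 1 := by
  classical
  obtain ⟨w⟩ := h
  induction w with
  | nil => exact ⟨0, fun _ _ => rfl, by simp⟩
  | cons hadj _ ih =>
    obtain ⟨x, hx, hbdry⟩ := ih
    obtain ⟨⟨k, hk, hends⟩, -⟩ := (SimpleGraph.fromEdgeSet_adj _).1 hadj
    have hsupp : ∀ j ∉ T, (Pi.single k 1 : E → R) j = 0 := fun j hj =>
      Pi.single_eq_of_ne (by rintro rfl; exact hj hk) 1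
    rcases Sym2.eq_iff.1 hends with ⟨hu, hv⟩ | ⟨hu, hv⟩
    · refine ⟨x + Pi.single k 1, fun j hj => by simp [hx j hj, hsupp j hj], ?_⟩
      rw [mulVec_add, hbdry, boundaryMatrix_mulVec_single, hu, hv]
      abel
    · refine ⟨x - Pi.single k 1, fun j hj => by simp [hx j hj, hsupp j hj], ?_⟩
      rw [mulVec_sub, hbdry, boundaryMatrix_mulVec_single, hu, hv]
      abel

theorem exists_fundamental_cycle [DecidableEq E] {T : Set E}
    (hT : (edgeGraph head tail T).Preconnected) (e : E) :
    ∃ z : E → R, boundaryMatrix R head tail *ᵥ z = 0 ∧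
      ∀ k ∉ T, z k = (Pi.single e 1 : E → R) k := by
  obtain ⟨x, hx, hbdry⟩ := exists_chain_of_reachable (R := R) (hT (head e) (tail e))
  refine ⟨Pi.single e 1 - x, ?_, fun k hk => by simp [hx k hk]⟩
  rw [mulVec_sub, hbdry, boundaryMatrix_mulVec_single, sub_self]

theorem range_boundaryMatrix [Fintype V] (hG : (edgeGraph head tail .univ).Connected) :
    LinearMap.range (boundaryMatrix R head tail).mulVecLin =
      LinearMap.ker (Fintype.linearCombination R (1 : V → R)) := by
  ext y
  rw [LinearMap.mem_ker, Fintype.linearCombination_apply]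
  constructor
  · rintro ⟨x, rfl⟩
    have hcol : (1 : V → R) ᵥ* boundaryMatrix R head tail = 0 :=
      funext fun k => by simp [vecMul_boundaryMatrix]
    calc ∑ v, (boundaryMatrix R head tail *ᵥ x) v • (1 : V → R) v
        = 1 ⬝ᵥ (boundaryMatrix R head tail *ᵥ x) := by simp [dotProduct]
      _ = 0 := by rw [dotProduct_mulVec, hcol, zero_dotProduct]
  · intro hy
    obtain ⟨r⟩ := hG.nonempty
    have hdecomp : y = ∑ v, y v • (Pi.single v 1 - Pi.single r 1 : V → R) := by
      simp only [smul_sub, Finset.sum_sub_distrib, ← Finset.sum_smul]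
      have hsum : ∑ v, y v = 0 := by simpa using hy
      rw [← pi_eq_sum_univ', hsum, zero_smul, sub_zero]
    rw [hdecomp]
    refine Submodule.sum_smul_mem _ _ fun v _ => ?_
    obtain ⟨x, -, hx⟩ := exists_chain_of_reachable (R := R) (hG.preconnected v r)
    exact ⟨x, hx⟩

theorem finrank_ker_boundaryMatrix_add_card [Fintype V] [IsDomain R]
    (hG : (edgeGraph head tail .univ).Connected) :
    Module.finrank R (LinearMap.ker (boundaryMatrix R head tail).mulVecLin) + Fintype.card V =
      Fintype.card E + 1 := by
  have hsum : Function.Surjective (Fintype.linearCombination R (1 : V → R)) := fun c => by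
    obtain ⟨r⟩ := hG.nonempty
    exact ⟨Pi.single r c, by simp [Fintype.linearCombination_apply_single]⟩
  have hE := finrank_range_add_finrank_ker_of_isDomain (boundaryMatrix R head tail).mulVecLin
  have hV := finrank_range_add_finrank_ker_of_isDomain (Fintype.linearCombination R (1 : V → R))
  rw [LinearMap.range_eq_top.2 hsum, finrank_top, Module.finrank_self,
    Module.finrank_fintype_fun_eq_card] at hV
  rw [range_boundaryMatrix hG, Module.finrank_fintype_fun_eq_card] at hE
  omega

end Boundary

section FlowBasis
variable {V E ι R : Type*} [DecidableEq V] [Fintype E] [Fintype ι] [CommRing R]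
  {head tail : E → V} {M : Matrix E ι R} {f : ι → E}

theorem comp_vecMul_submatrix (hf : Function.Injective f) {q : E → R}
    (hq : ∀ k ∉ Set.range f, q k = 0) : (q ∘ f) ᵥ* M.submatrix f id = q ᵥ* M := by
  ext j
  exact Fintype.sum_of_injective f hf _ _ (fun k hk => by rw [hq k hk, zero_mul]) fun _ => rfl

variable [DecidableEq ι]

theorem isUnit_det_submatrix_of_preconnected
    (hM : LinearMap.range M.mulVecLin = LinearMap.ker (boundaryMatrix R head tail).mulVecLin)
    (hf : Function.Injective f) (hT : (edgeGraph head tail (Set.range f)ᶜ).Preconnected) :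
    IsUnit (M.submatrix f id).det := by
  classical
  choose z hz hzf using exists_fundamental_cycle (R := R) hT
  have hlift (i : ι) : ∃ c, M.mulVecLin c = z (f i) := by
    rw [← LinearMap.mem_range, hM]
    exact hz (f i)
  choose c hc using hlift
  refine isUnit_det_of_right_inverse (B := (of c)ᵀ) ?_
  ext j i
  calc (M *ᵥ c i) (f j) = z (f i) (f j) := congrFun (hc i) (f j)
    _ = (Pi.single (f i) 1 : E → R) (f j) := hzf _ _ (by simp)
    _ = (1 : Matrix ι ι R) j i := by simp [Pi.single_apply, one_apply, hf.eq_iff]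

theorem det_submatrix_eq_zero_of_not_connected [Finite V] [IsDomain R]
    (hG : (edgeGraph head tail .univ).Connected) (hM : boundaryMatrix R head tail * M = 0)
    (hf : Function.Injective f) (hT : ¬ (edgeGraph head tail (Set.range f)ᶜ).Connected) :
    (M.submatrix f id).det = 0 := by
  have := Fintype.ofFinite V
  obtain ⟨p, hp, hpT⟩ := exists_cut_of_not_connected (R := R) hG hT
  rw [← exists_vecMul_eq_zero_iff]
  refine ⟨(p ᵥ* boundaryMatrix R head tail) ∘ f, fun hzero => hp (funext fun k => ?_), ?_⟩
  · by_cases hk : k ∈ Set.range f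
    · obtain ⟨i, rfl⟩ := hk
      exact congrFun hzero i
    · exact hpT k hk
  · rw [comp_vecMul_submatrix hf hpT, vecMul_vecMul, hM, vecMul_zero]

theorem sq_det_submatrix_eq_ite [Finite V] {M : Matrix E ι ℤ}
    [Decidable (edgeGraph head tail (Set.range f)ᶜ).Connected]
    (hG : (edgeGraph head tail .univ).Connected)
    (hM : LinearMap.range M.mulVecLin = LinearMap.ker (boundaryMatrix ℤ head tail).mulVecLin)
    (hf : Function.Injective f) :
    (M.submatrix f id).det ^ 2 =
      if (edgeGraph head tail (Set.range f)ᶜ).Connected then 1 else 0 := by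
  have hzero : boundaryMatrix ℤ head tail * M = 0 := ext_of_mulVec_single fun i => by
    rw [← mulVec_mulVec, zero_mulVec]
    exact hM.le (LinearMap.mem_range_self M.mulVecLin _)
  split_ifs with hT
  · exact Int.isUnit_sq (isUnit_det_submatrix_of_preconnected hM hf hT.preconnected)
  · rw [det_submatrix_eq_zero_of_not_connected hG hzero hf hT, zero_pow two_ne_zero]

theorem det_transpose_mul_self_eq_card_isSpanningTree [Fintype V] {M : Matrix E ι ℤ}
    (hG : (edgeGraph head tail .univ).Connected)
    (hM : LinearMap.range M.mulVecLin = LinearMap.ker (boundaryMatrix ℤ head tail).mulVecLin)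
    (hcard : Fintype.card ι + Fintype.card V = Fintype.card E + 1) :
    (Mᵀ * M).det = Nat.card {T : Finset E // IsSpanningTree head tail T} := by
  classical
  let e (S : Set.powersetCard E (Fintype.card ι)) : ι ≃ (S : Finset E) :=
    Fintype.equivOfCardEq (by simp)
  have hcompl (S : Set.powersetCard E (Fintype.card ι)) :
      (Set.range fun i => (e S i : E))ᶜ = ((S : Finset E)ᶜ : Finset E) := by
    rw [Finset.coe_compl, range_coe_comp_equiv]
  calc (Mᵀ * M).det = ∑ S, (M.submatrix (fun i => (e S i : E)) id).det ^ 2 := by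
        simp only [cauchy_binet _ _ e, sq, ← transpose_submatrix, det_transpose]
    _ = ∑ S : Set.powersetCard E (Fintype.card ι),
          if (edgeGraph head tail ((S : Finset E)ᶜ : Finset E)).Connected then 1 else 0 :=
        Fintype.sum_congr _ _ fun S => by
          rw [← hcompl]
          exact sq_det_submatrix_eq_ite hG hM (Subtype.val_injective.comp (e S).injective)
    _ = Nat.card {T : Finset E // IsSpanningTree head tail T} := by
        rw [Finset.sum_boole, ← Fintype.card_subtype, ← Nat.card_eq_fintype_card,
          natCard_powersetCard_compl_connected hcard]

end FlowBasis

theorem stmt_10_general {V E ι : Type*} [Fintype V] [DecidableEq V] [Fintype E] [DecidableEq E]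
    [Fintype ι] [DecidableEq ι] (head tail : E → V)
    (hG : (edgeGraph head tail Set.univ).Connected) (M : Matrix E ι ℤ)
    (hli : LinearIndependent ℤ Mᵀ)
    (hspan : Submodule.span ℤ (Set.range Mᵀ) =
      LinearMap.ker (Matrix.toLin' (boundaryMatrix ℤ head tail))) :
    Nat.card ((ι → ℤ) ⧸ LinearMap.range (Matrix.toLin' (Mᵀ * M))) =
      Nat.card {T : Finset E // IsSpanningTree head tail T} := by
  have hM : LinearMap.range M.mulVecLin = LinearMap.ker (boundaryMatrix ℤ head tail).mulVecLin :=
    (range_mulVecLin M).trans hspan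
  have hcard : Fintype.card ι + Fintype.card V = Fintype.card E + 1 := by
    rw [← finrank_ker_boundaryMatrix_add_card (R := ℤ) hG, ← toLin'_apply', ← hspan,
      finrank_span_eq_card hli]
  rw [natCard_quotient_range_eq_natAbs_det, LinearMap.det_toLin',
    det_transpose_mul_self_eq_card_isSpanningTree hG hM hcard, Int.natAbs_natCast]

/-- For a connected simple graph `G` with `n+1` vertices and `m` edges, and `ι` an
integer matrix whose columns form a `ℤ`-basis of the lattice of integral flows
`Flow(G) = ℤ^m ∩ ker ∂`, the order of `ℤ^g / im(ιᵀι)` equals the number of spanning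
trees of `G`. -/
theorem stmt_10 (n m g : ℕ) (G : SimpleGraph (Fin (n + 1))) (hG : G.Connected)
    (hg : m = n + g)
    (head tail : Fin m → Fin (n + 1))
    (hadj : ∀ k, G.Adj (head k) (tail k))
    (hinj : Function.Injective fun k => s(head k, tail k))
    (hsurj : ∀ e ∈ G.edgeSet, ∃ k, s(head k, tail k) = e)
    (del : Matrix (Fin (n + 1)) (Fin m) ℤ)
    (hdel : ∀ v k, del v k = if v = head k then 1 else if v = tail k then -1 else 0)
    (iota : Matrix (Fin m) (Fin g) ℤ)
    (hli : LinearIndependent ℤ iota.transpose)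
    (hspan : Submodule.span ℤ (Set.range iota.transpose) = LinearMap.ker (Matrix.toLin' del)) :
    Nat.card ((Fin g → ℤ) ⧸ LinearMap.range (Matrix.toLin' (iota.transpose * iota))) =
      Nat.card {T : Finset (Fin m) //
        (SimpleGraph.fromEdgeSet ((fun k => s(head k, tail k)) '' ↑T)).IsTree} := by
  have hne (k : Fin m) : head k ≠ tail k := (hadj k).ne
  have hbdry : del = boundaryMatrix ℤ head tail := by
    ext v k
    rw [hdel, boundaryMatrix_apply_of_ne (hne k)]
  have hconn : (edgeGraph head tail .univ).Connected := by
    rwa [edgeGraph_univ_eq hadj hsurj]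
  subst hbdry
  rw [stmt_10_general head tail hconn iota hli hspan]
  exact Nat.card_congr (Equiv.subtypeEquivRight fun T => (isTree_edgeGraph_iff hne hinj T).symm)
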